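/- Let n ≥ 1 and 1 ≤ p₂ ≤ p₁ < ∞. Suppose Ψ₁ : (0,∞) → (0,∞) satisfies the doubling condition (there is A₁ > 0 with A₁⁻¹ ≤ Ψ₁(s)/Ψ₁(r) ≤ A₁ whenever 1 ≤ s/r ≤ 2), Ψ₂ : (0,∞) → (0,∞) satisfies the right-doubling condition (there is A₃ > 0 with Ψ₂(s)/Ψ₂(r) ≤ A₃ whenever 1 ≤ s/r ≤ 2), and ∫₀¹ Ψ₁(t)^{p₂} Ψ₂(t) / t dt < ∞. Then L^{p₁,Ψ₁}(ℝ^n) ⊆ S_{p₂,Ψ₂}(ℝ^n); moreover there is c > 0 such that η_{p₂,Ψ₂}f(r) ≤ c ( ∫₀^{r/2} Ψ₁(t)^{p₂} Ψ₂(t)/t dt )^{1/p₂} ‖f‖_{L^{p₁,Ψ₁}} for every f ∈ L^{p₁,Ψ₁} and r > 0. -/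

import Mathlib

/-!
By Hölder's inequality the Morrey norm for a fixed `Ψ₁` increases with the exponent, so one may
assume `p₁ = p₂ = p`. Write `d = |x - y|`. Instead of cutting `B(x, r)` into dyadic annuli, bound
the kernel `Ψ₂(d) / d^n`, using right-doubling, by a multiple of its average
`∫_{d/4}^{d/2} Ψ₂(t) / t^{n+1} dt`. After exchanging the order of integration, the integral in the
Stummel modulus is dominated by `∫_0^{r/2} Ψ₂(t) / t^{n+1} ∫_{B(x,4t)} |f|^p dy dt`; the inner
integral is at most `|B(x,4t)| Ψ₁(4t)^p ‖f‖^p`, and `Ψ₁(4t)` is comparable to `Ψ₁(t)` by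
right-doubling again.

The weight `Ψ₁^p Ψ₂ / t` is itself right-doubling, hence integrable on every bounded interval as
soon as it is integrable on `(0, 1)`; so the modulus is finite, and it vanishes as `r → 0⁺` by
absolute continuity of the integral.
-/

open MeasureTheory Metric Filter Set ENNReal

noncomputable section

/-- Euclidean space ℝ^n. -/
abbrev Euc (n : ℕ) := EuclideanSpace ℝ (Fin n)

/-- Stummel p-modulus with general weight Ψ:
`η_{p,Ψ}f(r) = sup_x ( ∫_{|x-y|<r} |f(y)|^p Ψ(|x-y|)/|x-y|^n dy )^{1/p}`. -/
noncomputable def stummelMod (n : ℕ) (p : ℝ) (Ψ : ℝ → ℝ) (f : Euc n → ℝ) (r : ℝ) : ℝ≥0∞ :=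
  ⨆ x : Euc n,
    (∫⁻ y in ball x r,
        ENNReal.ofReal (|f y| ^ p * Ψ (dist x y) / dist x y ^ (n : ℝ))) ^ (1 / p)

/-- Stummel p-modulus with power weight Ψ(t) = t^α:
`η_{p,α}f(r) = sup_x ( ∫_{|x-y|<r} |f(y)|^p / |x-y|^{n-α} dy )^{1/p}`. -/
noncomputable def stummelModA (n : ℕ) (p α : ℝ) (f : Euc n → ℝ) (r : ℝ) : ℝ≥0∞ :=
  ⨆ x : Euc n,
    (∫⁻ y in ball x r,
        ENNReal.ofReal (|f y| ^ p / dist x y ^ ((n : ℝ) - α))) ^ (1 / p)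

/-- f ∈ L^p_loc(ℝ^n). -/
def MemLocLp (n : ℕ) (p : ℝ) (f : Euc n → ℝ) : Prop :=
  LocallyIntegrable (fun y => |f y| ^ p) volume

/-- The generalized Stummel p-class `S_{p,Ψ}`. -/
def MemStummel (n : ℕ) (p : ℝ) (Ψ : ℝ → ℝ) (f : Euc n → ℝ) : Prop :=
  MemLocLp n p f ∧ (∀ r > 0, stummelMod n p Ψ f r < ⊤) ∧
    Tendsto (stummelMod n p Ψ f) (nhdsWithin 0 (Ioi 0)) (nhds 0)

/-- The Stummel p-class `S_{p,α}` (power weight). -/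
def MemStummelA (n : ℕ) (p α : ℝ) (f : Euc n → ℝ) : Prop :=
  MemLocLp n p f ∧ (∀ r > 0, stummelModA n p α f r < ⊤) ∧
    Tendsto (stummelModA n p α f) (nhdsWithin 0 (Ioi 0)) (nhds 0)

/-- The bounded Stummel modulus class `S̃_{p,α}`. -/
def MemStummelBddA (n : ℕ) (p α : ℝ) (f : Euc n → ℝ) : Prop :=
  MemLocLp n p f ∧ ∀ r > 0, stummelModA n p α f r < ⊤

/-- Generalized Morrey norm `‖f‖_{L^{p,Ψ}}`. -/
noncomputable def morreyNorm (n : ℕ) (p : ℝ) (Ψ : ℝ → ℝ) (f : Euc n → ℝ) : ℝ≥0∞ :=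
  ⨆ (x : Euc n) (r : ℝ) (_ : 0 < r),
    (volume (ball x r))⁻¹ ^ (1 / p) * ENNReal.ofReal (Ψ r)⁻¹ *
      (∫⁻ y in ball x r, ENNReal.ofReal (|f y| ^ p)) ^ (1 / p)

/-- The generalized Morrey space `L^{p,Ψ}`. -/
def MemMorrey (n : ℕ) (p : ℝ) (Ψ : ℝ → ℝ) (f : Euc n → ℝ) : Prop :=
  MemLocLp n p f ∧ morreyNorm n p Ψ f < ⊤

/-- Classical Morrey norm `‖f‖_{L^{p,λ}}`. -/
noncomputable def morreyNormC (n : ℕ) (p lam : ℝ) (f : Euc n → ℝ) : ℝ≥0∞ :=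
  ⨆ (x : Euc n) (r : ℝ) (_ : 0 < r),
    ENNReal.ofReal (r ^ (-(lam / p))) *
      (∫⁻ y in ball x r, ENNReal.ofReal (|f y| ^ p)) ^ (1 / p)

/-- The classical Morrey space `L^{p,λ}`. -/
def MemMorreyC (n : ℕ) (p lam : ℝ) (f : Euc n → ℝ) : Prop :=
  MemLocLp n p f ∧ morreyNormC n p lam f < ⊤

/-- Generalized weak Morrey norm `‖f‖_{wL^{p,Ψ}}`. -/
noncomputable def weakMorreyNorm (n : ℕ) (p : ℝ) (Ψ : ℝ → ℝ) (f : Euc n → ℝ) : ℝ≥0∞ :=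
  ⨆ (x : Euc n) (r : ℝ) (_ : 0 < r) (t : ℝ) (_ : 0 < t),
    ENNReal.ofReal t * (volume {y ∈ ball x r | t < |f y|}) ^ (1 / p) /
      (ENNReal.ofReal (Ψ r) * (volume (ball x r)) ^ (1 / p))

/-- The generalized weak Morrey space `wL^{p,Ψ}`. -/
def MemWeakMorrey (n : ℕ) (p : ℝ) (Ψ : ℝ → ℝ) (f : Euc n → ℝ) : Prop :=
  Measurable f ∧ weakMorreyNorm n p Ψ f < ⊤

/-- Classical weak Morrey norm `‖f‖_{wL^{p,λ}}`. -/
noncomputable def weakMorreyNormC (n : ℕ) (p lam : ℝ) (f : Euc n → ℝ) : ℝ≥0∞ :=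
  ⨆ (x : Euc n) (r : ℝ) (_ : 0 < r) (t : ℝ) (_ : 0 < t),
    ENNReal.ofReal (r ^ (-(lam / p))) * ENNReal.ofReal t *
      (volume {y ∈ ball x r | t < |f y|}) ^ (1 / p)

/-- The classical weak Morrey space `wL^{p,λ}`. -/
def MemWeakMorreyC (n : ℕ) (p lam : ℝ) (f : Euc n → ℝ) : Prop :=
  Measurable f ∧ weakMorreyNormC n p lam f < ⊤

/-- Decreasing rearrangement `f*(t) = inf{σ > 0 : |{|f| > σ}| ≤ t}`. -/
noncomputable def rearrangement (n : ℕ) (f : Euc n → ℝ) (t : ℝ) : ℝ :=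
  sInf {σ : ℝ | 0 < σ ∧ volume {x : Euc n | σ < |f x|} ≤ ENNReal.ofReal t}

/-- Lorentz norm `‖f‖_{L^p_κ} = ( ∫₀^∞ (t^{1/κ} f*(t))^p dt/t )^{1/p}`. -/
noncomputable def lorentzNorm (n : ℕ) (kappa p : ℝ) (f : Euc n → ℝ) : ℝ≥0∞ :=
  (∫⁻ t in Ioi (0 : ℝ),
      ENNReal.ofReal ((t ^ (1 / kappa) * rearrangement n f t) ^ p / t)) ^ (1 / p)

/-- The Lorentz space `L^p_κ`. -/
def MemLorentz (n : ℕ) (kappa p : ℝ) (f : Euc n → ℝ) : Prop :=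
  Measurable f ∧ lorentzNorm n kappa p f < ⊤

end
open scoped Topology

lemma inv_measure_rpow_mul_eLpNorm'_le {α E : Type*} [MeasurableSpace α] [NormedAddCommGroup E]
    {μ : Measure α} [IsFiniteMeasure μ] [NeZero μ] {p q : ℝ} {u : α → E} (hp : 0 < p) (hpq : p ≤ q)
    (hu : AEStronglyMeasurable u μ) :
    (μ univ)⁻¹ ^ (1 / p) * eLpNorm' u p μ ≤ (μ univ)⁻¹ ^ (1 / q) * eLpNorm' u q μ := by
  have hμ₀ : μ univ ≠ 0 := NeZero.ne _
  calc (μ univ)⁻¹ ^ (1 / p) * eLpNorm' u p μ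
      ≤ (μ univ)⁻¹ ^ (1 / p) * (eLpNorm' u q μ * μ univ ^ (1 / p - 1 / q)) := by
        gcongr
        exact eLpNorm'_le_eLpNorm'_mul_rpow_measure_univ hp hpq hu
    _ = μ univ ^ (-(1 / p) + (1 / p - 1 / q)) * eLpNorm' u q μ := by
        rw [ENNReal.rpow_add _ _ hμ₀ (measure_ne_top μ univ), ENNReal.inv_rpow, ENNReal.rpow_neg]
        ring
    _ = (μ univ)⁻¹ ^ (1 / q) * eLpNorm' u q μ := by
        rw [ENNReal.inv_rpow, ← ENNReal.rpow_neg]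
        ring_nf

lemma rpow_lintegral_ofReal_abs_rpow {α : Type*} [MeasurableSpace α] {μ : Measure α} {p : ℝ}
    (hp : 0 ≤ p) (u : α → ℝ) :
    (∫⁻ y, ENNReal.ofReal (|u y| ^ p) ∂μ) ^ (1 / p) = eLpNorm' u p μ := by
  simp only [eLpNorm'_eq_lintegral_enorm, Real.enorm_eq_ofReal_abs,
    ENNReal.ofReal_rpow_of_nonneg (abs_nonneg _) hp]

lemma tendsto_setIntegral_Ioo_zero {E : Type*} [NormedAddCommGroup E] [NormedSpace ℝ E] {a b : ℝ}
    {φ : ℝ → E} (hab : a < b) (hφ : IntegrableOn φ (Ioo a b)) :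
    Tendsto (fun s => ∫ t in Ioo a s, φ t) (𝓝[>] a) (𝓝 0) := by
  have hvol : Tendsto (fun s => volume.restrict (Ioo a b) (Ioo a s)) (𝓝[>] a) (𝓝 0) := by
    have hlen : Tendsto (fun s => ENNReal.ofReal (s - a)) (𝓝[>] a) (𝓝 0) := by
      have hcont : Continuous fun s => ENNReal.ofReal (s - a) :=
        ENNReal.continuous_ofReal.comp (by fun_prop)
      simpa using (hcont.tendsto a).mono_left nhdsWithin_le_nhds
    refine tendsto_of_tendsto_of_tendsto_of_le_of_le tendsto_const_nhds hlen
      (fun _ => zero_le) fun s => ?_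
    simpa using Measure.restrict_apply_le (μ := volume) (Ioo a b) (Ioo a s)
  refine (hφ.tendsto_setIntegral_nhds_zero hvol).congr' ?_
  filter_upwards [Ioo_mem_nhdsGT hab] with s hs
  rw [Measure.restrict_restrict measurableSet_Ioo,
    inter_eq_left.2 (Ioo_subset_Ioo_right hs.2.le)]

section RightDoubling

/-- The right-doubling condition with constant `A`, i.e. `Ψ s / Ψ r ≤ A` whenever `1 ≤ s / r ≤ 2`,
for functions on `(0, ∞)`. The denominators are cleared, and the values of `Ψ` on `(-∞, 0]` are
irrelevant. -/
def RightDoublingWith (A : ℝ) (Ψ : ℝ → ℝ) : Prop :=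
  ∀ ⦃r s : ℝ⦄, 0 < r → r ≤ s → s ≤ 2 * r → Ψ s ≤ A * Ψ r

namespace RightDoublingWith

variable {A A₁ A₂ : ℝ} {Ψ Ψ₁ Ψ₂ : ℝ → ℝ}

lemma one_le (h : RightDoublingWith A Ψ) {r : ℝ} (hr : 0 < r) (hΨ : 0 < Ψ r) : 1 ≤ A :=
  le_of_mul_le_mul_right ((one_mul (Ψ r)).trans_le (h hr le_rfl (by linarith))) hΨ

lemma le_pow_mul (h : RightDoublingWith A Ψ) (hA : 0 ≤ A) (m : ℕ) {r s : ℝ} (hr : 0 < r)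
    (hrs : r ≤ s) (hs : s ≤ 2 ^ m * r) : Ψ s ≤ A ^ m * Ψ r := by
  induction m generalizing s with
  | zero =>
    obtain rfl : s = r := le_antisymm (by simpa using hs) hrs
    simp
  | succ m ih =>
    rw [pow_succ] at hs
    have hmid : max r (s / 2) ≤ 2 ^ m * r :=
      max_le (le_mul_of_one_le_left hr.le (one_le_pow₀ one_le_two)) (by linarith)
    calc Ψ s ≤ A * Ψ (max r (s / 2)) :=
          h (lt_max_of_lt_left hr) (max_le hrs (by linarith)) (by linarith [le_max_right r (s / 2)])
      _ ≤ A * (A ^ m * Ψ r) := by gcongr; exact ih (le_max_left _ _) hmid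
      _ = A ^ (m + 1) * Ψ r := by ring

lemma rpow_mul_div_id (h₁ : RightDoublingWith A₁ Ψ₁) (h₂ : RightDoublingWith A₂ Ψ₂)
    (hA₁ : 0 ≤ A₁) (hΨ₁ : ∀ t > 0, 0 ≤ Ψ₁ t) (hΨ₂ : ∀ t > 0, 0 ≤ Ψ₂ t) {p : ℝ} (hp : 0 ≤ p) :
    RightDoublingWith (A₁ ^ p * A₂) (fun t => Ψ₁ t ^ p * Ψ₂ t / t) := by
  intro r s hr hrs hs
  have hs₀ : 0 < s := hr.trans_le hrs
  have h₁r := hΨ₁ r hr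
  have h₁s := hΨ₁ s hs₀
  have h₂s := hΨ₂ s hs₀
  calc Ψ₁ s ^ p * Ψ₂ s / s ≤ (A₁ * Ψ₁ r) ^ p * (A₂ * Ψ₂ r) / r := by
        gcongr
        exacts [mul_nonneg (by positivity) (h₂s.trans (h₂ hr hrs hs)), h₁ hr hrs hs, h₂ hr hrs hs]
    _ = A₁ ^ p * A₂ * (Ψ₁ r ^ p * Ψ₂ r / r) := by rw [Real.mul_rpow hA₁ h₁r]; ring

lemma integrableOn_Ioo (h : RightDoublingWith A Ψ) (hA : 0 ≤ A) (hΨmeas : Measurable Ψ)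
    (hΨ : ∀ t > 0, 0 ≤ Ψ t) (hint : IntegrableOn Ψ (Ioo 0 1)) (R : ℝ) :
    IntegrableOn Ψ (Ioo 0 R) := by
  obtain ⟨m, hm⟩ := pow_unbounded_of_one_lt R (one_lt_two : (1 : ℝ) < 2)
  have hbdd : ∀ t ∈ Icc (1 : ℝ) (2 ^ m), ‖Ψ t‖ ≤ A ^ m * Ψ 1 := fun t ht => by
    rw [Real.norm_of_nonneg (hΨ t (one_pos.trans_le ht.1))]
    exact h.le_pow_mul hA m one_pos ht.1 (by simpa using ht.2)
  have hIcc : IntegrableOn Ψ (Icc 1 (2 ^ m)) :=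
    .of_bound (by simp) hΨmeas.aestronglyMeasurable _
      (ae_restrict_of_forall_mem measurableSet_Icc hbdd)
  refine (hint.union hIcc).mono_set fun t ht => ?_
  rcases lt_or_ge t 1 with ht₁ | ht₁
  exacts [Or.inl ⟨ht.1, ht₁⟩, Or.inr ⟨ht₁, (ht.2.trans hm).le⟩]

lemma ofReal_div_rpow_le_lintegral (h : RightDoublingWith A Ψ) (hA : 0 ≤ A) {a : ℝ} (ha : -1 ≤ a)
    {d : ℝ} (hd : 0 < d) :
    ENNReal.ofReal (Ψ d / d ^ a) ≤ ENNReal.ofReal (4 * A ^ 2) *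
      ∫⁻ t in Ioo (d / 4) (d / 2), ENNReal.ofReal (Ψ t / t ^ (a + 1)) := by
  have hpt : ∀ t ∈ Ioo (d / 4) (d / 2), ENNReal.ofReal (Ψ d / d ^ (a + 1)) ≤
      ENNReal.ofReal (A ^ 2) * ENNReal.ofReal (Ψ t / t ^ (a + 1)) := by
    rintro t ⟨htl, htu⟩
    have ht : 0 < t := by linarith
    have hΨ : Ψ d ≤ A ^ 2 * Ψ t := h.le_pow_mul hA 2 ht (by linarith) (by linarith)
    have hpow : t ^ (a + 1) ≤ d ^ (a + 1) :=
      Real.rpow_le_rpow ht.le (by linarith) (by linarith)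
    rw [← ENNReal.ofReal_mul (by positivity), ← mul_div_assoc,
      ENNReal.ofReal_div_of_pos (by positivity), ENNReal.ofReal_div_of_pos (by positivity)]
    gcongr
  calc ENNReal.ofReal (Ψ d / d ^ a)
      = ENNReal.ofReal 4 * ∫⁻ _ in Ioo (d / 4) (d / 2), ENNReal.ofReal (Ψ d / d ^ (a + 1)) := by
        rw [setLIntegral_const, Real.volume_Ioo, ← ENNReal.ofReal_mul' (by linarith),
          ← ENNReal.ofReal_mul (by norm_num), Real.rpow_add_one hd.ne']
        congr 1
        field_simp
        ring
    _ ≤ ENNReal.ofReal 4 * ∫⁻ t in Ioo (d / 4) (d / 2),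
          ENNReal.ofReal (A ^ 2) * ENNReal.ofReal (Ψ t / t ^ (a + 1)) := by
        exact mul_le_mul_right (setLIntegral_mono' measurableSet_Ioo hpt) _
    _ = _ := by
        rw [lintegral_const_mul' _ _ ENNReal.ofReal_ne_top, ← mul_assoc,
          ← ENNReal.ofReal_mul (by norm_num)]

end RightDoublingWith

end RightDoubling

section Potential

variable {X : Type*} [MeasurableSpace X] {μ : Measure X} [SFinite μ] {g : X → ℝ≥0∞}

lemma lintegral_ball_mul_lintegral_Ioo_le [PseudoMetricSpace X] [OpensMeasurableSpace X]
    (hg : AEMeasurable g μ) {k : ℝ → ℝ≥0∞} (hk : Measurable k) (x : X) (r : ℝ) :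
    ∫⁻ y in ball x r, (g y * ∫⁻ t in Ioo (dist x y / 4) (dist x y / 2), k t) ∂μ ≤
      ∫⁻ t in Ioo 0 (r / 2), k t * ∫⁻ y in ball x (4 * t), g y ∂μ := by
  let S : Set (X × ℝ) := {z | dist x z.1 < 4 * z.2}
  let F : X × ℝ → ℝ≥0∞ := S.indicator fun z => g z.1 * k z.2
  have hS : MeasurableSet S :=
    measurableSet_lt ((continuous_const.dist continuous_id).measurable.comp measurable_fst)
      (measurable_snd.const_mul 4)
  have hF : AEMeasurable F (μ.prod (volume.restrict (Ioo 0 (r / 2)))) :=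
    (hg.comp_fst.mul (hk.comp measurable_snd).aemeasurable).indicator hS
  calc ∫⁻ y in ball x r, (g y * ∫⁻ t in Ioo (dist x y / 4) (dist x y / 2), k t) ∂μ
      ≤ ∫⁻ y, (∫⁻ t in Ioo 0 (r / 2), F (y, t)) ∂μ := by
        refine (setLIntegral_mono' measurableSet_ball fun y hy => ?_).trans
          (setLIntegral_le_lintegral _ _)
        have hsub : Ioo (dist x y / 4) (dist x y / 2) ⊆ Ioo 0 (r / 2) :=
          Ioo_subset_Ioo (by positivity) (by linarith [mem_ball'.1 hy])
        rw [← lintegral_const_mul _ hk]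
        refine (setLIntegral_congr_fun measurableSet_Ioo fun t ht => ?_).trans_le
          (lintegral_mono_set hsub)
        have hmem : (y, t) ∈ S := by change dist x y < 4 * t; linarith [ht.1]
        simp only [F, indicator_of_mem hmem]
    _ = ∫⁻ t in Ioo 0 (r / 2), ∫⁻ y, F (y, t) ∂μ := lintegral_lintegral_swap hF
    _ = ∫⁻ t in Ioo 0 (r / 2), k t * ∫⁻ y in ball x (4 * t), g y ∂μ := by
        refine lintegral_congr fun t => ?_
        rw [← lintegral_const_mul'' _ hg.restrict, ← lintegral_indicator measurableSet_ball]
        simp only [F, S, indicator, mem_ofPred_eq, mem_ball', mul_comm]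

lemma RightDoublingWith.lintegral_ball_mul_div_rpow_le [MetricSpace X] [OpensMeasurableSpace X]
    [NullSingletonClass μ] {A : ℝ} {Ψ : ℝ → ℝ} (h : RightDoublingWith A Ψ) (hA : 0 ≤ A)
    (hΨmeas : Measurable Ψ) {a : ℝ} (ha : -1 ≤ a) (hg : AEMeasurable g μ) (x : X) (r : ℝ) :
    ∫⁻ y in ball x r, g y * ENNReal.ofReal (Ψ (dist x y) / dist x y ^ a) ∂μ ≤
      ENNReal.ofReal (4 * A ^ 2) *
        ∫⁻ t in Ioo 0 (r / 2), ENNReal.ofReal (Ψ t / t ^ (a + 1)) *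
          ∫⁻ y in ball x (4 * t), g y ∂μ := by
  have hker : ∀ᵐ y ∂μ, y ∈ ball x r →
      g y * ENNReal.ofReal (Ψ (dist x y) / dist x y ^ a) ≤
        ENNReal.ofReal (4 * A ^ 2) * (g y * ∫⁻ t in Ioo (dist x y / 4) (dist x y / 2),
          ENNReal.ofReal (Ψ t / t ^ (a + 1))) := by
    filter_upwards [measure_eq_zero_iff_ae_notMem.1 (measure_singleton (μ := μ) x)] with y hy _
    rw [mul_left_comm]
    gcongr
    exact h.ofReal_div_rpow_le_lintegral hA ha (dist_pos.2 (Ne.symm hy))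
  refine (setLIntegral_mono_ae' measurableSet_ball hker).trans ?_
  rw [lintegral_const_mul' _ _ ENNReal.ofReal_ne_top]
  gcongr
  exact lintegral_ball_mul_lintegral_Ioo_le hg (by fun_prop) x r

end Potential

section Morrey

variable {n : ℕ} {p q : ℝ} {Ψ : ℝ → ℝ} {f : Euc n → ℝ}

-- `f` itself may fail to be measurable: only the measurability of `|f| ^ p` is assumed.
lemma MemLocLp.aemeasurable_abs (hp : 0 < p) (hf : MemLocLp n p f) :
    AEMeasurable (fun y => |f y|) volume := by
  have hpow : AEMeasurable (fun y => |f y| ^ p) volume :=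
    (LocallyIntegrable.aestronglyMeasurable hf).aemeasurable
  simpa only [Real.rpow_rpow_inv (abs_nonneg _) hp.ne'] using hpow.pow_const p⁻¹

lemma MemLocLp.mono_exponent (hp : 0 < p) (hpq : p ≤ q) (hf : MemLocLp n q f) :
    MemLocLp n p f := by
  have hmeas : AEMeasurable (fun y => |f y| ^ p) volume :=
    (hf.aemeasurable_abs (hp.trans_le hpq)).pow_const p
  refine ((locallyIntegrable_const (1 : ℝ)).add hf).mono hmeas.aestronglyMeasurable
    (Eventually.of_forall fun y => ?_)
  have hy := abs_nonneg (f y)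
  have hp₀ := Real.rpow_nonneg hy p
  have hq₀ := Real.rpow_nonneg hy q
  rw [Pi.add_apply, Real.norm_of_nonneg hp₀, Real.norm_of_nonneg (by positivity)]
  rcases le_total |f y| 1 with h | h
  · linarith [Real.rpow_le_one hy h hp.le]
  · linarith [Real.rpow_le_rpow_of_exponent_le h hpq]

lemma morreyNorm_mono_exponent (hp : 0 < p) (hpq : p ≤ q)
    (hf : AEMeasurable (fun y => |f y|) volume) : morreyNorm n p Ψ f ≤ morreyNorm n q Ψ f := by
  refine iSup_mono fun x => iSup₂_mono fun r hr => ?_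
  have : NeZero (volume.restrict (ball x r)) :=
    ⟨by simpa using (measure_ball_pos volume x hr).ne'⟩
  have : IsFiniteMeasure (volume.restrict (ball x r)) := ⟨by simp [measure_ball_lt_top]⟩
  have hnorm := inv_measure_rpow_mul_eLpNorm'_le (μ := volume.restrict (ball x r)) hp hpq
    hf.aestronglyMeasurable.restrict
  simp only [← Real.norm_eq_abs, eLpNorm'_norm, Measure.restrict_apply_univ] at hnorm
  rw [rpow_lintegral_ofReal_abs_rpow hp.le, rpow_lintegral_ofReal_abs_rpow (hp.le.trans hpq),
    mul_right_comm, mul_right_comm _ (ENNReal.ofReal (Ψ r)⁻¹)]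
  gcongr

lemma lintegral_ball_le_morreyNorm (hp : 0 < p) (x : Euc n) {s : ℝ} (hs : 0 < s) (hΨ : 0 < Ψ s) :
    ∫⁻ y in ball x s, ENNReal.ofReal (|f y| ^ p) ≤
      volume (ball x s) * (ENNReal.ofReal (Ψ s) * morreyNorm n p Ψ f) ^ p := by
  have hnorm : (volume (ball x s))⁻¹ ^ (1 / p) * ENNReal.ofReal (Ψ s)⁻¹ *
      (∫⁻ y in ball x s, ENNReal.ofReal (|f y| ^ p)) ^ (1 / p) ≤ morreyNorm n p Ψ f :=
    le_iSup_of_le x (le_iSup₂_of_le s hs le_rfl)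
  rwa [mul_comm (_ ^ _), mul_assoc, ← ENNReal.mul_rpow_of_nonneg _ _ (by positivity),
    ENNReal.ofReal_inv_of_pos hΨ,
    ENNReal.inv_mul_le_iff (ENNReal.ofReal_pos.2 hΨ).ne' ENNReal.ofReal_ne_top, one_div,
    ENNReal.rpow_inv_le_iff hp,
    ENNReal.inv_mul_le_iff (measure_ball_pos volume x hs).ne' measure_ball_lt_top.ne] at hnorm

end Morrey

section Stummel

variable {n : ℕ} {p A₁ A₂ : ℝ} {Ψ₁ Ψ₂ : ℝ → ℝ} {f : Euc n → ℝ}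

lemma RightDoublingWith.lintegral_ball_four_mul_le_morreyNorm (h : RightDoublingWith A₁ Ψ₁)
    (hA₁ : 0 ≤ A₁) (hΨ₁ : ∀ t > 0, 0 < Ψ₁ t) (hp : 0 < p) (x : Euc n) {t : ℝ} (ht : 0 < t) :
    ∫⁻ y in ball x (4 * t), ENNReal.ofReal (|f y| ^ p) ≤
      ENNReal.ofReal (4 ^ n * (A₁ ^ 2) ^ p * volume.real (ball (0 : Euc n) 1)) *
        morreyNorm n p Ψ₁ f ^ p * ENNReal.ofReal (t ^ n * Ψ₁ t ^ p) := by
  have h4t : 0 < 4 * t := by positivity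
  have hΨ₁t := hΨ₁ t ht
  have hvol : volume (ball x (4 * t)) =
      ENNReal.ofReal ((4 * t) ^ n * volume.real (ball (0 : Euc n) 1)) := by
    rw [Measure.addHaar_ball_of_pos _ _ h4t, finrank_euclideanSpace_fin,
      ENNReal.ofReal_mul (by positivity), ofReal_measureReal measure_ball_lt_top.ne]
  have hdbl : Ψ₁ (4 * t) ≤ A₁ ^ 2 * Ψ₁ t := h.le_pow_mul hA₁ 2 ht (by linarith) (by linarith)
  calc ∫⁻ y in ball x (4 * t), ENNReal.ofReal (|f y| ^ p)
      ≤ volume (ball x (4 * t)) * (ENNReal.ofReal (Ψ₁ (4 * t)) * morreyNorm n p Ψ₁ f) ^ p :=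
        lintegral_ball_le_morreyNorm hp x h4t (hΨ₁ _ h4t)
    _ ≤ volume (ball x (4 * t)) * (ENNReal.ofReal (A₁ ^ 2 * Ψ₁ t) * morreyNorm n p Ψ₁ f) ^ p := by
        gcongr
    _ = ENNReal.ofReal ((4 * t) ^ n * volume.real (ball (0 : Euc n) 1) * (A₁ ^ 2 * Ψ₁ t) ^ p) *
          morreyNorm n p Ψ₁ f ^ p := by
        rw [hvol, ENNReal.mul_rpow_of_nonneg _ _ hp.le,
          ENNReal.ofReal_rpow_of_nonneg (by positivity) hp.le, ← mul_assoc,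
          ← ENNReal.ofReal_mul (by positivity)]
    _ = _ := by
        rw [mul_right_comm (ENNReal.ofReal _), ← ENNReal.ofReal_mul (by positivity),
          Real.mul_rpow (by positivity) hΨ₁t.le]
        ring_nf

lemma lintegral_stummel_le_morreyNorm [NeZero n] (h₁ : RightDoublingWith A₁ Ψ₁)
    (h₂ : RightDoublingWith A₂ Ψ₂) (hA₁ : 0 ≤ A₁) (hA₂ : 0 ≤ A₂) (hΨ₁meas : Measurable Ψ₁)
    (hΨ₂meas : Measurable Ψ₂) (hΨ₁ : ∀ t > 0, 0 < Ψ₁ t) (hp : 0 < p) (hf : MemLocLp n p f)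
    (x : Euc n) (r : ℝ) :
    ∫⁻ y in ball x r, ENNReal.ofReal (|f y| ^ p * Ψ₂ (dist x y) / dist x y ^ (n : ℝ)) ≤
      ENNReal.ofReal (4 * A₂ ^ 2 * (4 ^ n * (A₁ ^ 2) ^ p * volume.real (ball (0 : Euc n) 1))) *
        (∫⁻ t in Ioo 0 (r / 2), ENNReal.ofReal (Ψ₁ t ^ p * Ψ₂ t / t)) *
        morreyNorm n p Ψ₁ f ^ p := by
  set K : ℝ := 4 ^ n * (A₁ ^ 2) ^ p * volume.real (ball (0 : Euc n) 1)
  set N := morreyNorm n p Ψ₁ f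
  have hg : AEMeasurable (fun y => ENNReal.ofReal (|f y| ^ p)) volume :=
    ((hf.aemeasurable_abs hp).pow_const p).ennreal_ofReal
  have hinner : ∀ t ∈ Ioo 0 (r / 2), ENNReal.ofReal (Ψ₂ t / t ^ ((n : ℝ) + 1)) *
      ∫⁻ y in ball x (4 * t), ENNReal.ofReal (|f y| ^ p) ≤
        ENNReal.ofReal K * N ^ p * ENNReal.ofReal (Ψ₁ t ^ p * Ψ₂ t / t) := by
    rintro t ⟨ht, -⟩
    have hΨ₁t := hΨ₁ t ht
    calc _ ≤ ENNReal.ofReal (Ψ₂ t / t ^ ((n : ℝ) + 1)) *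
            (ENNReal.ofReal K * N ^ p * ENNReal.ofReal (t ^ n * Ψ₁ t ^ p)) := by
          gcongr
          exact h₁.lintegral_ball_four_mul_le_morreyNorm hA₁ hΨ₁ hp x ht
      _ = _ := by
          rw [mul_left_comm, ← ENNReal.ofReal_mul' (by positivity), Real.rpow_add_one ht.ne',
            Real.rpow_natCast]
          congr 2
          field_simp
  calc ∫⁻ y in ball x r, ENNReal.ofReal (|f y| ^ p * Ψ₂ (dist x y) / dist x y ^ (n : ℝ))
      = ∫⁻ y in ball x r,
          ENNReal.ofReal (|f y| ^ p) * ENNReal.ofReal (Ψ₂ (dist x y) / dist x y ^ (n : ℝ)) := by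
        refine lintegral_congr fun y => ?_
        rw [mul_div_assoc, ENNReal.ofReal_mul (by positivity)]
    _ ≤ ENNReal.ofReal (4 * A₂ ^ 2) * ∫⁻ t in Ioo 0 (r / 2),
          ENNReal.ofReal (Ψ₂ t / t ^ ((n : ℝ) + 1)) *
            ∫⁻ y in ball x (4 * t), ENNReal.ofReal (|f y| ^ p) :=
        h₂.lintegral_ball_mul_div_rpow_le hA₂ hΨ₂meas (by linarith [n.cast_nonneg (α := ℝ)]) hg x r
    _ ≤ ENNReal.ofReal (4 * A₂ ^ 2) * ∫⁻ t in Ioo 0 (r / 2),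
          ENNReal.ofReal K * N ^ p * ENNReal.ofReal (Ψ₁ t ^ p * Ψ₂ t / t) :=
        mul_le_mul_right (setLIntegral_mono' measurableSet_Ioo hinner) _
    _ = _ := by
        rw [lintegral_const_mul _ (by fun_prop),
          ENNReal.ofReal_mul (p := 4 * A₂ ^ 2) (by positivity)]
        ring

lemma exists_stummelMod_le_morreyNorm [NeZero n] (h₁ : RightDoublingWith A₁ Ψ₁)
    (h₂ : RightDoublingWith A₂ Ψ₂) (hA₁ : 0 < A₁) (hA₂ : 0 < A₂) (hΨ₁meas : Measurable Ψ₁)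
    (hΨ₂meas : Measurable Ψ₂) (hΨ₁ : ∀ t > 0, 0 < Ψ₁ t) (hp : 0 < p) :
    ∃ c > 0, ∀ f : Euc n → ℝ, MemLocLp n p f → ∀ r, stummelMod n p Ψ₂ f r ≤
      ENNReal.ofReal c *
        (∫⁻ t in Ioo 0 (r / 2), ENNReal.ofReal (Ψ₁ t ^ p * Ψ₂ t / t)) ^ (1 / p) *
        morreyNorm n p Ψ₁ f := by
  have hball : 0 < volume.real (ball (0 : Euc n) 1) :=
    ENNReal.toReal_pos (measure_ball_pos volume _ one_pos).ne' measure_ball_lt_top.ne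
  refine ⟨(4 * A₂ ^ 2 * (4 ^ n * (A₁ ^ 2) ^ p * volume.real (ball (0 : Euc n) 1))) ^ (1 / p),
    by positivity, fun f hf r => iSup_le fun x => ?_⟩
  rw [← ENNReal.ofReal_rpow_of_nonneg (by positivity) (by positivity), one_div,
    ENNReal.rpow_inv_le_iff hp, ENNReal.mul_rpow_of_nonneg _ _ hp.le,
    ENNReal.mul_rpow_of_nonneg _ _ hp.le, ENNReal.rpow_inv_rpow hp.ne',
    ENNReal.rpow_inv_rpow hp.ne']
  exact lintegral_stummel_le_morreyNorm h₁ h₂ hA₁.le hA₂.le hΨ₁meas hΨ₂meas hΨ₁ hp hf x r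

lemma MemStummel.of_stummelMod_le {Ψ φ : ℝ → ℝ} (hf : MemLocLp n p f) (hp : 0 < p)
    (hφ : IntegrableOn φ (Ioo 0 1)) {C : ℝ≥0∞} (hC : C ≠ ⊤)
    (hle : ∀ r > 0, stummelMod n p Ψ f r ≤
      C * ENNReal.ofReal ((∫ t in Ioo 0 (r / 2), φ t) ^ (1 / p))) :
    MemStummel n p Ψ f := by
  have hhalf : Tendsto (fun r : ℝ => r / 2) (𝓝[>] 0) (𝓝[>] 0) := by
    refine tendsto_nhdsWithin_iff.2 ⟨?_, eventually_mem_nhdsWithin.mono fun r => half_pos (a := r)⟩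
    simpa using ((continuous_id.div_const (2 : ℝ)).tendsto 0).mono_left nhdsWithin_le_nhds
  have hint : Tendsto (fun r => (∫ t in Ioo 0 (r / 2), φ t) ^ (1 / p)) (𝓝[>] 0) (𝓝 0) := by
    simpa [hp.ne'] using ((tendsto_setIntegral_Ioo_zero one_pos hφ).comp hhalf).rpow_const
      (p := 1 / p) (Or.inr (by positivity))
  have hbound : Tendsto (fun r => C * ENNReal.ofReal ((∫ t in Ioo 0 (r / 2), φ t) ^ (1 / p)))
      (𝓝[>] 0) (𝓝 0) := by
    simpa using ENNReal.Tendsto.const_mul (ENNReal.tendsto_ofReal hint) (Or.inr hC)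
  exact ⟨hf, fun r hr => (hle r hr).trans_lt (ENNReal.mul_lt_top hC.lt_top ENNReal.ofReal_lt_top),
    tendsto_of_tendsto_of_tendsto_of_le_of_le' tendsto_const_nhds hbound
      (Eventually.of_forall fun _ => zero_le) (eventually_mem_nhdsWithin.mono hle)⟩

end Stummel

theorem morrey_subset_stummel_general (n : ℕ) (hn : 1 ≤ n) (p₁ p₂ : ℝ)
    (hp₂ : 0 < p₂) (hp : p₂ ≤ p₁)
    (Ψ₁ Ψ₂ : ℝ → ℝ) (hΨ₁meas : Measurable Ψ₁) (hΨ₂meas : Measurable Ψ₂)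
    (hΨ₁pos : ∀ t > 0, 0 < Ψ₁ t) (hΨ₂pos : ∀ t > 0, 0 < Ψ₂ t)
    (A₁ : ℝ) (h₁ : RightDoublingWith A₁ Ψ₁) (A₂ : ℝ) (h₂ : RightDoublingWith A₂ Ψ₂)
    (hint : IntegrableOn (fun t => Ψ₁ t ^ p₂ * Ψ₂ t / t) (Ioo (0 : ℝ) 1) volume) :
    (∀ f : Euc n → ℝ, MemMorrey n p₁ Ψ₁ f → MemStummel n p₂ Ψ₂ f) ∧
    ∃ c > 0, ∀ f : Euc n → ℝ, MemMorrey n p₁ Ψ₁ f → ∀ r > 0,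
      stummelMod n p₂ Ψ₂ f r ≤
        ENNReal.ofReal c *
          ENNReal.ofReal ((∫ t in Ioo (0 : ℝ) (r / 2), Ψ₁ t ^ p₂ * Ψ₂ t / t) ^ (1 / p₂)) *
          morreyNorm n p₁ Ψ₁ f := by
  have : NeZero n := ⟨by omega⟩
  have hA₁ : 0 < A₁ := one_pos.trans_le (h₁.one_le one_pos (hΨ₁pos 1 one_pos))
  have hA₂ : 0 < A₂ := one_pos.trans_le (h₂.one_le one_pos (hΨ₂pos 1 one_pos))
  have hnonneg : ∀ t > 0, 0 ≤ Ψ₁ t ^ p₂ * Ψ₂ t / t := fun t ht => by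
    have := hΨ₁pos t ht
    have := hΨ₂pos t ht
    positivity
  have hweight : ∀ R, IntegrableOn (fun t => Ψ₁ t ^ p₂ * Ψ₂ t / t) (Ioo 0 R) :=
    (h₁.rpow_mul_div_id h₂ hA₁.le (fun t ht => (hΨ₁pos t ht).le) (fun t ht => (hΨ₂pos t ht).le)
      hp₂.le).integrableOn_Ioo (by positivity) (by fun_prop) hnonneg hint
  obtain ⟨c, hc, hle⟩ :=
    exists_stummelMod_le_morreyNorm (n := n) h₁ h₂ hA₁ hA₂ hΨ₁meas hΨ₂meas hΨ₁pos hp₂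
  have hbound : ∀ f : Euc n → ℝ, MemMorrey n p₁ Ψ₁ f → ∀ r > 0, stummelMod n p₂ Ψ₂ f r ≤
      ENNReal.ofReal c *
        ENNReal.ofReal ((∫ t in Ioo (0 : ℝ) (r / 2), Ψ₁ t ^ p₂ * Ψ₂ t / t) ^ (1 / p₂)) *
        morreyNorm n p₁ Ψ₁ f := fun f hf r _ => by
    rw [← ENNReal.ofReal_rpow_of_nonneg
        (setIntegral_nonneg measurableSet_Ioo fun t ht => hnonneg t ht.1) (by positivity),
      ofReal_integral_eq_lintegral_ofReal (hweight _)
        (ae_restrict_of_forall_mem measurableSet_Ioo fun t ht => hnonneg t ht.1)]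
    refine (hle f (hf.1.mono_exponent hp₂ hp) r).trans ?_
    gcongr
    exact morreyNorm_mono_exponent hp₂ hp (hf.1.aemeasurable_abs (hp₂.trans_le hp))
  refine ⟨fun f hf => .of_stummelMod_le (C := ENNReal.ofReal c * morreyNorm n p₁ Ψ₁ f)
    (hf.1.mono_exponent hp₂ hp) hp₂ hint (ENNReal.mul_ne_top ENNReal.ofReal_ne_top hf.2.ne)
    fun r hr => ?_, c, hc, hbound⟩
  rw [mul_right_comm]
  exact hbound f hf r hr

/-- If `Ψ₁` is doubling, `Ψ₂` is right-doubling, and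
`∫₀¹ Ψ₁(t)^{p₂} Ψ₂(t)/t dt < ∞`, then `L^{p₁,Ψ₁}(ℝ^n) ⊆ S_{p₂,Ψ₂}(ℝ^n)`; moreover there is
`c > 0` with `η_{p₂,Ψ₂}f(r) ≤ c (∫₀^{r/2} Ψ₁(t)^{p₂} Ψ₂(t)/t dt)^{1/p₂} ‖f‖_{L^{p₁,Ψ₁}}`. -/
theorem morrey_subset_stummel (n : ℕ) (hn : 1 ≤ n) (p₁ p₂ : ℝ)
    (hp₂ : 1 ≤ p₂) (hp : p₂ ≤ p₁)
    (Ψ₁ Ψ₂ : ℝ → ℝ) (hΨ₁meas : Measurable Ψ₁) (hΨ₂meas : Measurable Ψ₂)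
    (hΨ₁pos : ∀ t > 0, 0 < Ψ₁ t) (hΨ₂pos : ∀ t > 0, 0 < Ψ₂ t)
    (A₁ : ℝ) (hA₁ : 0 < A₁)
    (hΨ₁dbl : ∀ r s : ℝ, 0 < r → r ≤ s → s ≤ 2 * r →
      A₁⁻¹ ≤ Ψ₁ s / Ψ₁ r ∧ Ψ₁ s / Ψ₁ r ≤ A₁)
    (A₃ : ℝ) (hA₃ : 0 < A₃)
    (hΨ₂dbl : ∀ r s : ℝ, 0 < r → r ≤ s → s ≤ 2 * r → Ψ₂ s / Ψ₂ r ≤ A₃)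
    (hint : IntegrableOn (fun t => Ψ₁ t ^ p₂ * Ψ₂ t / t) (Ioo (0 : ℝ) 1) volume) :
    (∀ f : Euc n → ℝ, MemMorrey n p₁ Ψ₁ f → MemStummel n p₂ Ψ₂ f) ∧
    ∃ c > 0, ∀ f : Euc n → ℝ, MemMorrey n p₁ Ψ₁ f → ∀ r > 0,
      stummelMod n p₂ Ψ₂ f r ≤
        ENNReal.ofReal c *
          ENNReal.ofReal ((∫ t in Ioo (0 : ℝ) (r / 2), Ψ₁ t ^ p₂ * Ψ₂ t / t) ^ (1 / p₂)) *
          morreyNorm n p₁ Ψ₁ f := by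
  exact morrey_subset_stummel_general n hn p₁ p₂ (by linarith) hp Ψ₁ Ψ₂ hΨ₁meas hΨ₂meas hΨ₁pos
    hΨ₂pos A₁ (fun r s hr hrs hs => (div_le_iff₀ (hΨ₁pos r hr)).1 (hΨ₁dbl r s hr hrs hs).2)
    A₃ (fun r s hr hrs hs => (div_le_iff₀ (hΨ₂pos r hr)).1 (hΨ₂dbl r s hr hrs hs)) hint
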